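/- Let R be a Hecke symmetry with parameter q such that j_q ≠ 0 for 2 ≤ j ≤ k. Then the R-skew-symmetrizer A^(k) is an idempotent, A^(k) A^(k) = A^(k), and it absorbs the lower skew-symmetrizer: A^(k) A^(k−1) = A^(k−1) A^(k) = A^(k), where A^(k−1) acts in the first k−1 tensor factors of (ℂ^N)^{⊗k}. -/

import Mathlib

open Matrix BigOperators

noncomputable section

/-- An `N² × N²` complex matrix, viewed as an operator on `ℂ^N ⊗ ℂ^N`. -/
abbrev RMat (N : ℕ) := Matrix (Fin N × Fin N) (Fin N × Fin N) ℂ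

/-- A matrix on the `k`-th tensor power of `ℂ^N`, with entries in `A`. -/
abbrev TMat (N k : ℕ) (A : Type _) := Matrix (Fin k → Fin N) (Fin k → Fin N) A

/-- The `q`-number `j_q = (q^j - q^{-j})/(q - q^{-1})`. -/
def qNum (q : ℂ) (j : ℕ) : ℂ := (q ^ j - q⁻¹ ^ j) / (q - q⁻¹)

/-- Embedding of an `N²×N²` matrix `R` into the `k`-th tensor power,
acting in the (0-based) tensor factors `i` and `i+1`.  The paper's `R_i`
(1-based) is `embR k R (i-1)`. -/
def embR {N : ℕ} (k : ℕ) (R : RMat N) (i : ℕ) : TMat N k ℂ := fun f g =>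
  if h : i + 1 < k then
    if ∀ j : Fin k, j.val ≠ i → j.val ≠ i + 1 → f j = g j then
      R (f ⟨i, Nat.lt_of_succ_lt h⟩, f ⟨i + 1, h⟩) (g ⟨i, Nat.lt_of_succ_lt h⟩, g ⟨i + 1, h⟩)
    else 0
  else (1 : TMat N k ℂ) f g

/-- `X ⊗ I^{⊗(k-1)}` : the first copy `X_{1̄}` of an `N×N` matrix over `A`. -/
def emb1 {N : ℕ} (k : ℕ) {A : Type _} [Ring A] (X : Matrix (Fin N) (Fin N) A) :
    TMat N k A := fun f g =>
  if h : 0 < k then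
    if ∀ j : Fin k, j.val ≠ 0 → f j = g j then X (f ⟨0, h⟩) (g ⟨0, h⟩) else 0
  else (1 : TMat N k A) f g

/-- Lift a complex matrix to a matrix over the `ℂ`-algebra `A`. -/
def liftC {N k : ℕ} (A : Type _) [Ring A] [Algebra ℂ A] (X : TMat N k ℂ) : TMat N k A :=
  X.map (algebraMap ℂ A)

/-- The copies `X_{1̄}, X_{2̄}, …` of `X` in the `k`-th tensor power:
`copyX k R Rinv X i` is the paper's `X_{\overline{i+1}}`, i.e.
`X_{1̄} = X ⊗ I^{⊗(k-1)}` and `X_{\overline{i+1}} = R_i X_{ī} R_i⁻¹`. -/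
def copyX {N : ℕ} (k : ℕ) (R Rinv : RMat N) {A : Type _} [Ring A] [Algebra ℂ A]
    (X : Matrix (Fin N) (Fin N) A) : ℕ → TMat N k A
  | 0 => emb1 k X
  | i + 1 => liftC A (embR k R i) * copyX k R Rinv X i * liftC A (embR k Rinv i)

/-- The `R`-skew-symmetrizers, on the ambient `k`-th tensor power:
`Asym k R q j` is `A^{(j)}` (acting in the first `j` factors). -/
def Asym {N : ℕ} (k : ℕ) (R : RMat N) (q : ℂ) : ℕ → TMat N k ℂ
  | 0 => 1
  | 1 => 1
  | j + 2 =>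
      (qNum q (j + 2))⁻¹ •
        (Asym k R q (j + 1) *
          ((q ^ (j + 1)) • (1 : TMat N k ℂ) - (qNum q (j + 1)) • embR k R j) *
          Asym k R q (j + 1))

/-- The `R`-symmetrizers, on the ambient `k`-th tensor power:
`Ssym k R q j` is `S^{(j)}` (acting in the first `j` factors). -/
def Ssym {N : ℕ} (k : ℕ) (R : RMat N) (q : ℂ) : ℕ → TMat N k ℂ
  | 0 => 1
  | 1 => 1
  | j + 2 =>
      (qNum q (j + 2))⁻¹ •
        (Ssym k R q (j + 1) *
          ((q⁻¹ ^ (j + 1)) • (1 : TMat N k ℂ) + (qNum q (j + 1)) • embR k R j) *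
          Ssym k R q (j + 1))

/-- The braid relation `R₁₂ R₂₃ R₁₂ = R₂₃ R₁₂ R₂₃` on `(ℂ^N)^{⊗3}`. -/
def IsBraiding {N : ℕ} (R : RMat N) : Prop :=
  embR 3 R 0 * embR 3 R 1 * embR 3 R 0 = embR 3 R 1 * embR 3 R 0 * embR 3 R 1

/-- The Hecke condition `(q·I − R)(q⁻¹·I + R) = 0`. -/
def HeckeCond {N : ℕ} (R : RMat N) (q : ℂ) : Prop :=
  (q • (1 : RMat N) - R) * (q⁻¹ • (1 : RMat N) + R) = 0

/-- The Reflection Equation `R M₁ R M₁ = M₁ R M₁ R` (on `(ℂ^N)^{⊗2}`,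
with entries in `A`). -/
def RERel {N : ℕ} (R : RMat N) {A : Type _} [Ring A] [Algebra ℂ A]
    (M : Matrix (Fin N) (Fin N) A) : Prop :=
  liftC A (embR 2 R 0) * emb1 2 M * liftC A (embR 2 R 0) * emb1 2 M
    = emb1 2 M * liftC A (embR 2 R 0) * emb1 2 M * liftC A (embR 2 R 0)

/-- The relation `R⁻¹ D₁ R⁻¹ D₁ = D₁ R⁻¹ D₁ R⁻¹` on the matrix `D`,
where `Rinv = R⁻¹`. -/
def DDRel {N : ℕ} (Rinv : RMat N) {A : Type _} [Ring A] [Algebra ℂ A]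
    (D : Matrix (Fin N) (Fin N) A) : Prop :=
  liftC A (embR 2 Rinv 0) * emb1 2 D * liftC A (embR 2 Rinv 0) * emb1 2 D
    = emb1 2 D * liftC A (embR 2 Rinv 0) * emb1 2 D * liftC A (embR 2 Rinv 0)

/-- The permutation relations `D₁ R M₁ = R M₁ R⁻¹ D₁ R⁻¹ + I`, where `Rinv = R⁻¹`. -/
def PermRel {N : ℕ} (R Rinv : RMat N) {A : Type _} [Ring A] [Algebra ℂ A]
    (M D : Matrix (Fin N) (Fin N) A) : Prop :=
  emb1 2 D * liftC A (embR 2 R 0) * emb1 2 M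
    = liftC A (embR 2 R 0) * emb1 2 M * liftC A (embR 2 Rinv 0) * emb1 2 D *
        liftC A (embR 2 Rinv 0) + 1

/-- `Ψ` is the skew-inverse of `R`:  `Σ_{j,b} R^{ij}_{ab} Ψ^{bc}_{jd} = δ^i_d δ^c_a`. -/
def SkewInv {N : ℕ} (R Ψ : RMat N) : Prop :=
  ∀ i a c d : Fin N,
    (∑ j : Fin N, ∑ b : Fin N, R (i, j) (a, b) * Ψ (b, c) (j, d))
      = if i = d ∧ c = a then 1 else 0

/-- The matrix `C`, `C^c_d = Σ_i Ψ^{ic}_{id}`. -/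
def Cmat {N : ℕ} (Ψ : RMat N) : Matrix (Fin N) (Fin N) ℂ :=
  fun c d => ∑ i : Fin N, Ψ (i, c) (i, d)

/-- The `R`-trace over all `k` tensor factors: `⟨X⟩_{1…k} = Tr(C^{⊗k} X)`. -/
def rTr {N k : ℕ} {A : Type _} [Ring A] [Algebra ℂ A] (C : Matrix (Fin N) (Fin N) ℂ)
    (X : TMat N k A) : A :=
  ∑ f : Fin k → Fin N, ∑ g : Fin k → Fin N, (∏ j : Fin k, C (f j) (g j)) • X g f

/-- The chain `X_{1̄} X_{2̄} ⋯ X_{n̄}`. -/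
def upChain {N : ℕ} (k : ℕ) (R Rinv : RMat N) {A : Type _} [Ring A] [Algebra ℂ A]
    (X : Matrix (Fin N) (Fin N) A) (n : ℕ) : TMat N k A :=
  ((List.range n).map (copyX k R Rinv X)).prod

/-- The reversed chain `X_{n̄} X_{\overline{n-1}} ⋯ X_{1̄}`. -/
def downChain {N : ℕ} (k : ℕ) (R Rinv : RMat N) {A : Type _} [Ring A] [Algebra ℂ A]
    (X : Matrix (Fin N) (Fin N) A) (n : ℕ) : TMat N k A :=
  ((List.range n).reverse.map (copyX k R Rinv X)).prod

/-- The Capelli chain `L_{1̄}(L_{2̄} + q·1_q I)(L_{3̄} + q²·2_q I) ⋯ (L_{n̄} + q^{n-1}·(n-1)_q I)`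
(note `0_q = 0`). -/
def capChainA {N : ℕ} (k : ℕ) (R Rinv : RMat N) (q : ℂ) {A : Type _} [Ring A] [Algebra ℂ A]
    (L : Matrix (Fin N) (Fin N) A) (n : ℕ) : TMat N k A :=
  ((List.range n).map
    (fun i => copyX k R Rinv L i + ((q ^ i) * qNum q i) • (1 : TMat N k A))).prod

/-- The symmetric Capelli chain
`L_{1̄}(L_{2̄} - q⁻¹·1_q I) ⋯ (L_{n̄} - q^{-(n-1)}·(n-1)_q I)`. -/
def capChainS {N : ℕ} (k : ℕ) (R Rinv : RMat N) (q : ℂ) {A : Type _} [Ring A] [Algebra ℂ A]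
    (L : Matrix (Fin N) (Fin N) A) (n : ℕ) : TMat N k A :=
  ((List.range n).map
    (fun i => copyX k R Rinv L i - ((q⁻¹ ^ i) * qNum q i) • (1 : TMat N k A))).prod

/-- The descending chain `R_{a→b} = R_a R_{a-1} ⋯ R_b` (1-based indices;
identity when `b > a`). -/
def rChainDesc {N : ℕ} (k : ℕ) (R : RMat N) (a b : ℕ) : TMat N k ℂ :=
  ((List.range' b (a + 1 - b)).reverse.map (fun j => embR k R (j - 1))).prod

/-- The ascending chain `R_{b→a} = R_b R_{b+1} ⋯ R_a` (1-based indices;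
identity when `b > a`). -/
def rChainAsc {N : ℕ} (k : ℕ) (R : RMat N) (b a : ℕ) : TMat N k ℂ :=
  ((List.range' b (a + 1 - b)).map (fun j => embR k R (j - 1))).prod

/-- Amplification of a matrix on `m` tensor factors along `e : Fin m → Fin k`. -/
def ampl {N m k : ℕ} (e : Fin m → Fin k) (X : TMat N m ℂ) : TMat N k ℂ := fun f g =>
  open Classical in
  if ∀ j, j ∉ Set.range e → f j = g j then X (f ∘ e) (g ∘ e) else 0

theorem ampl_mul_apply {N m k : ℕ} {e : Fin m → Fin k} (he : Function.Injective e)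
    (X : TMat N m ℂ) (Y : TMat N k ℂ) (f g : Fin k → Fin N) :
    (ampl e X * Y) f g = ∑ u, X (f ∘ e) u * Y (Function.extend e u f) g := by
  rw [Matrix.mul_apply]
  symm
  apply Fintype.sum_of_injective (fun u => Function.extend e u f)
  · intro u v huv
    funext i
    have := congrFun huv (e i)
    simpa [he.extend_apply] using this
  · intro h hh
    have : ¬ ∀ j, j ∉ Set.range e → f j = h j := by
      intro H
      apply hh
      refine ⟨h ∘ e, ?_⟩
      funext j
      by_cases hj : ∃ i, e i = j
      · obtain ⟨i, rfl⟩ := hj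
        simp [he.extend_apply]
      · simp only [Function.extend_apply' _ _ _ hj]
        exact H j (by simpa using hj)
    simp only [ampl, if_neg this, zero_mul]
  · intro u
    have h1 : ∀ j, j ∉ Set.range e → f j = Function.extend e u f j := by
      intro j hj
      rw [Function.extend_apply' _ _ _ (by simpa using hj)]
    have h2 : Function.extend e u f ∘ e = u := by
      funext i; simp [he.extend_apply]
    simp only [ampl, if_pos h1, h2]

theorem ampl_mul {N m k : ℕ} {e : Fin m → Fin k} (he : Function.Injective e)
    (X Y : TMat N m ℂ) : ampl e (X * Y) = ampl e X * ampl e Y := by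
  ext f g
  rw [ampl_mul_apply he]
  have h2 : ∀ u, Function.extend e u f ∘ e = u := by
    intro u; funext i; simp [he.extend_apply]
  have h1 : ∀ u, (∀ j, j ∉ Set.range e → Function.extend e u f j = g j) ↔
      (∀ j, j ∉ Set.range e → f j = g j) := by
    intro u
    refine forall_congr' fun j => forall_congr' fun hj => ?_
    rw [Function.extend_apply' _ _ _ (by simpa using hj)]
  simp only [ampl, h2, h1]
  split_ifs
  · rw [Matrix.mul_apply]
  · simp

theorem ampl_mul_disj {N m k : ℕ} {e e' : Fin m → Fin k} (he : Function.Injective e)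
    (hd : ∀ i j, e i ≠ e' j) (X Y : TMat N m ℂ) (f g : Fin k → Fin N) :
    (ampl e X * ampl e' Y) f g = open Classical in
      if ∀ j, j ∉ Set.range e → j ∉ Set.range e' → f j = g j then
        X (f ∘ e) (g ∘ e) * Y (f ∘ e') (g ∘ e') else 0 := by
  rw [ampl_mul_apply he]
  have h3 : ∀ u, Function.extend e u f ∘ e' = f ∘ e' := by
    intro u; funext i
    exact Function.extend_apply' _ _ _ (by rintro ⟨a, ha⟩; exact hd _ _ ha)
  simp only [ampl, h3]
  have h1 : ∀ u, (∀ j, j ∉ Set.range e' → Function.extend e u f j = g j) ↔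
      (u = g ∘ e ∧ ∀ j, j ∉ Set.range e → j ∉ Set.range e' → f j = g j) := by
    intro u
    constructor
    · intro H
      constructor
      · funext i
        have := H (e i) (by rintro ⟨a, ha⟩; exact hd _ _ ha.symm)
        simpa [he.extend_apply] using this
      · intro j hj hj'
        have := H j hj'
        rwa [Function.extend_apply' _ _ _ (by simpa using hj)] at this
    · rintro ⟨rfl, H⟩ j hj'
      by_cases hj : ∃ i, e i = j
      · obtain ⟨i, rfl⟩ := hj
        simp [he.extend_apply]
      · rw [Function.extend_apply' _ _ _ hj]
        exact H j (by simpa using hj) hj'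
  simp only [h1]
  rw [Finset.sum_eq_single (g ∘ e)]
  · simp
  · intro u _ hu
    simp [hu]
  · simp

theorem ampl_comm {N m k : ℕ} {e e' : Fin m → Fin k} (he : Function.Injective e)
    (he' : Function.Injective e')
    (hd : ∀ i j, e i ≠ e' j) (X Y : TMat N m ℂ) :
    ampl e X * ampl e' Y = ampl e' Y * ampl e X := by
  ext f g
  rw [ampl_mul_disj he hd, ampl_mul_disj he' (fun i j => (hd j i).symm), mul_comm]
  have : (∀ j, j ∉ Set.range e → j ∉ Set.range e' → f j = g j) ↔
      (∀ j, j ∉ Set.range e' → j ∉ Set.range e → f j = g j) := by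
    constructor <;> intro H j h1 h2 <;> exact H j h2 h1
  simp only [this]

/-- The shift embedding. -/
def shiftE (m k i : ℕ) (h : i + m ≤ k) : Fin m → Fin k :=
  fun a => ⟨i + a.val, by have := a.isLt; omega⟩

theorem shiftE_inj (m k i : ℕ) (h : i + m ≤ k) : Function.Injective (shiftE m k i h) := by
  intro a b hab
  simp only [shiftE, Fin.mk.injEq] at hab
  exact Fin.ext (by omega)

theorem embR_eq_ampl {N m k i l : ℕ} (R : RMat N) (h : i + m ≤ k) (hl : l + 1 < m) :
    embR k R (i + l) = ampl (shiftE m k i h) (embR m R l) := by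
  ext f g
  have hk : i + l + 1 < k := by omega
  simp only [embR, ampl, dif_pos hk, dif_pos hl]
  have key : (∀ j : Fin k, j.val ≠ i + l → j.val ≠ i + l + 1 → f j = g j) ↔
      ((∀ j, j ∉ Set.range (shiftE m k i h) → f j = g j) ∧
      (∀ j : Fin m, j.val ≠ l → j.val ≠ l + 1 →
        (f ∘ shiftE m k i h) j = (g ∘ shiftE m k i h) j)) := by
    constructor
    · intro H
      constructor
      · intro j hj
        apply H
        · intro hc; apply hj; exact ⟨⟨l, by omega⟩, Fin.ext (by simp [shiftE, hc])⟩
        · intro hc; apply hj; exact ⟨⟨l + 1, by omega⟩, Fin.ext (by simp [shiftE, hc]; omega)⟩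
      · intro j h1 h2
        apply H <;> simp only [shiftE] <;> omega
    · rintro ⟨H1, H2⟩ j h1 h2
      by_cases hj : j ∈ Set.range (shiftE m k i h)
      · obtain ⟨a, rfl⟩ := hj
        simp only [shiftE] at h1 h2
        exact H2 a (by omega) (by omega)
      · exact H1 j hj
  by_cases hA : ∀ j, j ∉ Set.range (shiftE m k i h) → f j = g j
  · by_cases hB : ∀ j : Fin m, j.val ≠ l → j.val ≠ l + 1 →
        (f ∘ shiftE m k i h) j = (g ∘ shiftE m k i h) j
    · rw [if_pos (key.2 ⟨hA, hB⟩), if_pos hA, if_pos hB]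
      rfl
    · rw [if_neg (fun hc => hB (key.1 hc).2), if_pos hA, if_neg hB]
  · rw [if_neg (fun hc => hA (key.1 hc).1), if_neg hA]

theorem embR_braid {N k i : ℕ} (R : RMat N) (hbr : IsBraiding R) (h : i + 2 < k) :
    embR k R i * embR k R (i + 1) * embR k R i =
      embR k R (i + 1) * embR k R i * embR k R (i + 1) := by
  have h3 : i + 3 ≤ k := h
  have e0 : embR k R i = _ := embR_eq_ampl (l := 0) R h3 (by norm_num)
  have e1 := embR_eq_ampl (l := 1) R h3 (by norm_num)
  rw [e0, e1]
  simp only [← ampl_mul (shiftE_inj 3 k i h3)]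
  rw [show _ = _ from hbr]

theorem embR_comm {N k i j : ℕ} (R : RMat N) (h : i + 1 < j) (hj : j + 1 < k) :
    embR k R i * embR k R j = embR k R j * embR k R i := by
  have e0 : embR k R i = _ := embR_eq_ampl (m := 2) (l := 0) (i := i) (k := k) R (by omega) (by norm_num)
  have e1 : embR k R j = _ := embR_eq_ampl (m := 2) (l := 0) (i := j) (k := k) R (by omega) (by norm_num)
  rw [e0, e1]
  apply ampl_comm (shiftE_inj _ _ _ _) (shiftE_inj _ _ _ _)
  intro a b hab
  simp only [shiftE, Fin.mk.injEq] at hab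
  omega

theorem ampl_add {N m k : ℕ} (e : Fin m → Fin k) (X Y : TMat N m ℂ) :
    ampl e (X + Y) = ampl e X + ampl e Y := by
  ext f g
  simp only [ampl, Matrix.add_apply]
  split_ifs <;> simp

theorem ampl_smul {N m k : ℕ} (e : Fin m → Fin k) (c : ℂ) (X : TMat N m ℂ) :
    ampl e (c • X) = c • ampl e X := by
  ext f g
  simp only [ampl, Matrix.smul_apply]
  split_ifs <;> simp

theorem ampl_one {N m k : ℕ} (e : Fin m → Fin k) :
    ampl e (1 : TMat N m ℂ) = 1 := by
  ext f g
  simp only [ampl, Matrix.one_apply]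
  by_cases hfg : f = g
  · subst hfg; simp
  · rw [if_neg hfg]
    split_ifs with h1 h2
    · exfalso
      apply hfg
      funext j
      by_cases hj : j ∈ Set.range e
      · obtain ⟨a, rfl⟩ := hj
        exact congrFun h2 a
      · exact h1 j hj
    · rfl
    · rfl

theorem embR_sq {N k i : ℕ} (R : RMat N) (q : ℂ) (hq0 : q ≠ 0) (hH : HeckeCond R q)
    (h : i + 1 < k) :
    embR k R i * embR k R i = 1 + (q - q⁻¹) • embR k R i := by
  have h3 : i + 2 ≤ k := h
  have e0 : embR k R i = _ := embR_eq_ampl (l := 0) R h3 (by norm_num)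
  have hR : R * R = 1 + (q - q⁻¹) • R := by
    have := hH
    unfold HeckeCond at this
    have h1 : (q • (1 : RMat N) - R) * (q⁻¹ • (1 : RMat N) + R) =
        1 + (q - q⁻¹) • R - R * R := by
      simp only [sub_mul, mul_add, smul_mul_assoc, mul_smul_comm, one_mul, mul_one]
      match_scalars <;> field_simp <;> ring
    rw [h1] at this
    exact (sub_eq_zero.1 this).symm
  have hS : embR 2 R 0 = R.submatrix (finTwoArrowEquiv (Fin N)) (finTwoArrowEquiv (Fin N)) := by
    ext f g
    have : ∀ j : Fin 2, j.val ≠ 0 → j.val ≠ 0 + 1 → f j = g j := by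
      intro j h1 h2; exfalso; omega
    simp only [embR, if_pos this]
    rfl
  have h2 : embR 2 R 0 * embR 2 R 0 = 1 + (q - q⁻¹) • embR 2 R 0 := by
    rw [hS, Matrix.submatrix_mul_equiv, hR]
    rw [Matrix.submatrix_add, Matrix.submatrix_smul]
    simp only [Pi.add_apply, Pi.smul_apply, Matrix.submatrix_one_equiv]
  rw [e0, ← ampl_mul (shiftE_inj _ _ _ _), h2, ampl_add, ampl_smul, ampl_one]

theorem qNum_rec (q : ℂ) (hq0 : q ≠ 0) (hd : q - q⁻¹ ≠ 0) (j : ℕ) :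
    q ^ j + q⁻¹ * qNum q j = qNum q (j + 1) := by
  unfold qNum
  rw [eq_div_iff hd, add_mul, mul_assoc, div_mul_cancel₀ _ hd, pow_succ, pow_succ]
  ring

theorem Asym_succ {N k : ℕ} (R : RMat N) (q : ℂ) (j : ℕ) :
    Asym k R q (j + 2) = (qNum q (j + 2))⁻¹ •
        (Asym k R q (j + 1) *
          ((q ^ (j + 1)) • (1 : TMat N k ℂ) - (qNum q (j + 1)) • embR k R j) *
          Asym k R q (j + 1)) := by
  rw [Asym]

theorem Asym_comm {N k : ℕ} (R : RMat N) (q : ℂ) (i : ℕ) (hi : i + 1 < k) :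
    ∀ j, j ≤ i → Commute (Asym k R q j) (embR k R i)
  | 0, _ => by rw [Asym]; exact Commute.one_left _
  | 1, _ => by rw [Asym]; exact Commute.one_left _
  | j + 2, hj => by
    have ih := Asym_comm R q i hi (j + 1) (by omega)
    have hc : Commute (embR k R j) (embR k R i) := embR_comm R (by omega) hi
    rw [Asym_succ]
    exact ((ih.mul_left (((Commute.one_left _).smul_left _).sub_left
      (hc.smul_left _))).mul_left ih).smul_left _

/-- Key step, in an abstract algebra. -/
theorem key_right {B : Type*} [Ring B] [Algebra ℂ B] (q x y z : ℂ) (hq0 : q ≠ 0) (hy : y ≠ 0)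
    (a A s t : B) (hA : A = y⁻¹ • (a * (x • 1 - z • s) * a)) (hAa : A * a = A)
    (hat : a * t = t * a) (hs : A * s = -q⁻¹ • A) (ht : t * t = 1 + (q - q⁻¹) • t)
    (hbr : s * t * s = t * s * t) :
    A * ((q * x) • 1 - y • t) * A * t = -q⁻¹ • (A * ((q * x) • 1 - y • t) * A) ∨ A * A ≠ A := by
  by_cases hAA : A * A = A
  swap
  · exact Or.inr hAA
  left
  have hAta : A * t * a = A * t := by
    rw [mul_assoc, ← hat, ← mul_assoc, hAa]
  have h1 : y • (A * t * A) = x • (A * t) - z • (A * t * s * a) := by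
    have h0 : y • (A * t * A) = y • (A * t * (y⁻¹ • (a * (x • 1 - z • s) * a))) := by
      rw [← hA]
    rw [h0, mul_smul_comm, smul_smul, mul_inv_cancel₀ hy, one_smul, ← mul_assoc, ← mul_assoc,
      hAta, mul_sub, sub_mul, mul_smul_comm, mul_smul_comm, mul_one, smul_mul_assoc,
      smul_mul_assoc, hAta]
  have hX : A * ((q * x) • 1 - y • t) * A = (q * x) • A - x • (A * t) + z • (A * t * s * a) := by
    rw [mul_sub, sub_mul, mul_smul_comm, mul_smul_comm, mul_one, smul_mul_assoc, smul_mul_assoc,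
      h1, hAA]
    abel
  have hts : A * t * s * a * t = -q⁻¹ • (A * t * s * a) := by
    have : A * t * s * a * t = A * (t * s * t) * a := by
      simp only [mul_assoc, hat]
    rw [this, ← hbr, ← mul_assoc, ← mul_assoc, hs]
    simp only [smul_mul_assoc]
  have htt : A * t * t = A + (q - q⁻¹) • (A * t) := by
    rw [mul_assoc, ht, mul_add, mul_one, mul_smul_comm]
  rw [hX, add_mul, sub_mul, smul_mul_assoc, smul_mul_assoc, smul_mul_assoc, hts, htt]
  match_scalars <;> field_simp <;> ring

theorem key_left {B : Type*} [Ring B] [Algebra ℂ B] (q x y z : ℂ) (hq0 : q ≠ 0) (hy : y ≠ 0)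
    (a A s t : B) (hA : A = y⁻¹ • (a * (x • 1 - z • s) * a)) (hAa : a * A = A)
    (hat : a * t = t * a) (hs : s * A = -q⁻¹ • A) (ht : t * t = 1 + (q - q⁻¹) • t)
    (hbr : s * t * s = t * s * t) (hAA : A * A = A) :
    t * (A * ((q * x) • 1 - y • t) * A) = -q⁻¹ • (A * ((q * x) • 1 - y • t) * A) := by
  have := key_right (B := Bᵐᵒᵖ) q x y z hq0 hy (.op a) (.op A) (.op s) (.op t)
    (by rw [hA]; simp [← MulOpposite.op_mul, mul_assoc, ← MulOpposite.op_smul, ← MulOpposite.op_one, ← MulOpposite.op_sub])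
    (by rw [← MulOpposite.op_mul, hAa])
    (by rw [← MulOpposite.op_mul, ← MulOpposite.op_mul, hat])
    (by rw [← MulOpposite.op_mul, hs, MulOpposite.op_smul])
    (by rw [← MulOpposite.op_mul, ht]; simp)
    (by simp only [← MulOpposite.op_mul, ← mul_assoc, hbr])
  rcases this with this | this
  · have h := congrArg MulOpposite.unop this
    simpa [mul_assoc] using h
  · exact absurd (by rw [← MulOpposite.op_mul, hAA]) this

theorem Asym_main {N k : ℕ} (R : RMat N) (q : ℂ)
    (hq0 : q ≠ 0) (hd : q - q⁻¹ ≠ 0)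
    (hbr : IsBraiding R) (hH : HeckeCond R q)
    (hqk : ∀ j : ℕ, 2 ≤ j → j ≤ k → qNum q j ≠ 0) :
    ∀ j, j + 1 ≤ k → 
      Asym k R q (j + 1) * Asym k R q (j + 1) = Asym k R q (j + 1) ∧
      Asym k R q (j + 1) * Asym k R q j = Asym k R q (j + 1) ∧
      Asym k R q j * Asym k R q (j + 1) = Asym k R q (j + 1) ∧
      (∀ i, i + 1 = j → Asym k R q (j + 1) * embR k R i = -q⁻¹ • Asym k R q (j + 1)) ∧
      (∀ i, i + 1 = j → embR k R i * Asym k R q (j + 1) = -q⁻¹ • Asym k R q (j + 1))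
  | 0, _ => by
    simp [Asym]
  | j + 1, hj => by
    obtain ⟨hAA, hAa, haA, hr, hl⟩ := Asym_main R q hq0 hd hbr hH hqk j (by omega)
    have hy2 : qNum q (j + 2) ≠ 0 := hqk _ (by omega) hj
    have ht := embR_sq (k := k) (i := j) R q hq0 hH (by omega)
    have hRL : Asym k R q (j + 2) * embR k R j = -q⁻¹ • Asym k R q (j + 2) ∧
        embR k R j * Asym k R q (j + 2) = -q⁻¹ • Asym k R q (j + 2) := by
      rw [Asym_succ, smul_mul_assoc, mul_smul_comm, smul_comm (-q⁻¹)]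
      rcases j with _ | j
      · have h1 : qNum q (0 + 1) = 1 := by
          simp [qNum, div_self hd]
        have h2 : Asym k R q (0 + 1) = 1 := by simp [Asym]
        rw [h1, h2]
        constructor
        · congr 1
          simp only [one_mul, mul_one, sub_mul, smul_mul_assoc, ht]
          match_scalars <;> field_simp <;> ring
        · congr 1
          simp only [one_mul, mul_one, mul_sub, mul_smul_comm, ht]
          match_scalars <;> field_simp <;> ring
      · have hy := hqk (j + 2) (by omega) (by omega)
        have hb := embR_braid (k := k) (i := j) R hbr (by omega)
        have hc := (Asym_comm (k := k) R q (j + 1) (by omega) (j + 1) le_rfl).eq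
        rw [pow_succ' q (j + 1)]
        constructor
        · rcases key_right q (q ^ (j + 1)) (qNum q (j + 2)) (qNum q (j + 1)) hq0 hy
            (Asym k R q (j + 1)) (Asym k R q (j + 2)) (embR k R j) (embR k R (j + 1))
            (Asym_succ R q j) hAa hc (hr j rfl) ht hb with h | h
          · rw [h]
          · exact absurd hAA h
        · have h := key_left q (q ^ (j + 1)) (qNum q (j + 2)) (qNum q (j + 1)) hq0 hy
            (Asym k R q (j + 1)) (Asym k R q (j + 2)) (embR k R j) (embR k R (j + 1))
            (Asym_succ R q j) haA hc (hl j rfl) ht hb hAA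
          rw [h]
    have hBA : Asym k R q (j + 2) * Asym k R q (j + 1) = Asym k R q (j + 2) := by
      rw [Asym_succ, smul_mul_assoc, mul_assoc, hAA]
    have hAB : Asym k R q (j + 1) * Asym k R q (j + 2) = Asym k R q (j + 2) := by
      rw [Asym_succ, mul_smul_comm, ← mul_assoc, ← mul_assoc, hAA]
    refine ⟨?_, hBA, hAB, ?_, ?_⟩
    · show Asym k R q (j + 2) * Asym k R q (j + 2) = Asym k R q (j + 2)
      have h0 := congrArg (Asym k R q (j + 2) * ·) (Asym_succ (k := k) R q j)
      rw [h0, mul_smul_comm, ← mul_assoc, ← mul_assoc, hBA, mul_sub, mul_smul_comm,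
        mul_smul_comm, hRL.1, mul_one, smul_smul, ← sub_smul, smul_mul_assoc, hBA, smul_smul]
      have := qNum_rec q hq0 hd (j + 1)
      rw [show q ^ (j + 1) - qNum q (j + 1) * -q⁻¹ = qNum q (j + 2) by rw [← this]; ring,
        inv_mul_cancel₀ hy2, one_smul]
    · rintro i hi
      obtain rfl : i = j := by omega
      exact hRL.1
    · rintro i hi
      obtain rfl : i = j := by omega
      exact hRL.2

/-- the skew-symmetrizer is an idempotent and absorbs the lower
skew-symmetrizer:  `A^(k) A^(k) = A^(k)` and
`A^(k) A^(k−1) = A^(k−1) A^(k) = A^(k)`. -/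
theorem statement10 {N : ℕ} (R Rinv : RMat N) (q : ℂ) (k : ℕ)
    (hq0 : q ≠ 0) (hq1 : q ≠ 1) (hqm1 : q ≠ -1)
    (hinv : R * Rinv = 1) (hinv' : Rinv * R = 1)
    (hbr : IsBraiding R) (hH : HeckeCond R q)
    (hqk : ∀ j : ℕ, 2 ≤ j → j ≤ k → qNum q j ≠ 0) :
    Asym k R q k * Asym k R q k = Asym k R q k ∧
    Asym k R q k * Asym k R q (k - 1) = Asym k R q k ∧
    Asym k R q (k - 1) * Asym k R q k = Asym k R q k := by
  have hd : q - q⁻¹ ≠ 0 := by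
    intro h
    have h1 : q * q = 1 := by
      have : q = q⁻¹ := sub_eq_zero.1 h
      nth_rewrite 2 [this]
      exact mul_inv_cancel₀ hq0
    rcases mul_self_eq_one_iff.1 h1 with h | h
    · exact hq1 h
    · exact hqm1 h
  rcases k with _ | j
  · simp [Asym]
  · obtain ⟨h1, h2, h3, -, -⟩ := Asym_main R q hq0 hd hbr hH hqk j le_rfl
    exact ⟨h1, h2, h3⟩
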